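/- Let a, p be real numbers with p ≠ 1 and let d, m, n be positive integers. Then M_n^{({m}_d)}(a,p) = Σ_{n ≥ n_1 ≥ … ≥ n_{md} ≥ 1} [ (Π_{r=1}^{d} (1-p)^{n_{mr−m+1} − n_{mr}}) / (n_1 ⋯ n_{md}) ] · [ (1-p+ap)^{n_{md}} − (1-p)^{n_{md}} ], where {m}_d denotes the exponent tuple consisting of m repeated d times. -/

import Mathlib

/-- `ent m α` is the entry `n_{α+1}` (0-indexed access) of the index tuple `m`,
with junk value `1` out of range. -/
def ent {L : ℕ} (m : Fin L → ℕ) (α : ℕ) : ℕ :=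
  if h : α < L then m ⟨α, h⟩ else 1

/-- The finite set of index tuples `(n₁,…,n_L)` with `n ≥ n₁ ≥ n₂ ≥ ⋯ ≥ n_L ≥ 1`. -/
def Idx (n L : ℕ) : Finset (Fin L → ℕ) :=
  (Fintype.piFinset fun _ : Fin L => Finset.Icc 1 n).filter
    fun m => ∀ i j : Fin L, i ≤ j → m j ≤ m i

/-- Generalized multiple harmonic-star value
`ζ*_k(s₁,…,s_d; a) = ∑_{k ≥ n₁ ≥ ⋯ ≥ n_d ≥ 1} a^{n_d}/(n₁^{s₁} ⋯ n_d^{s_d})`. -/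
noncomputable def zetaStarK (k : ℕ) (s : List ℕ) (a : ℝ) : ℝ :=
  ∑ m ∈ Idx k s.length,
    a ^ ent m (s.length - 1) / ∏ i : Fin s.length, (m i : ℝ) ^ s.get i

/-- Mneimneh-like sum
`M_n^{(s₁,…,s_d)}(a,p) = ∑_{k=1}^n C(n,k)·p^k·(1-p)^{n-k}·ζ*_k(s;a)`. -/
noncomputable def M (n : ℕ) (s : List ℕ) (a p : ℝ) : ℝ :=
  ∑ k ∈ Finset.Icc 1 n, (n.choose k : ℝ) * p ^ k * (1 - p) ^ (n - k) * zetaStarK k s a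

/-!
Write `B f n = ∑ k ≤ n, C(n,k) p^k (1-p)^(n-k) f k` for the binomial mean of a sequence. On
sequences with `f 0 = 0`, Pascal's rule and `(n+1) C(n,k) = (k+1) C(n+1,k+1)` show how `B` passes
through the two operations building a multiple harmonic-star value: it commutes with
`f ↦ ∑ 1 ≤ j ≤ k, f j / j`, and it turns the pointwise division `f ↦ f k / k` into the damped sum
`g ↦ ∑ 1 ≤ j ≤ n, (1-p)^(n-j) / j * g j`. An exponent `m` is one summation after `m - 1` divisions,
so it becomes a block of `m` sums whose weights telescope inside the block. The innermost sequence
is taken to be `a^k - 0^k`, which vanishes at `0`, agrees with `a^k` elsewhere, and has binomial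
mean `(1-p+ap)^n - (1-p)^n`.
-/

open Finset Matrix

section IndexTuples

variable {n L : ℕ} {t : Fin L → ℕ}

theorem ent_of_lt {i : ℕ} (h : i < L) : ent t i = t ⟨i, h⟩ := dif_pos h

theorem ent_vecCons_zero (j : ℕ) (t : Fin L → ℕ) : ent (vecCons j t) 0 = j := by
  simp [ent]

theorem ent_vecCons_succ (j : ℕ) (t : Fin L → ℕ) (i : ℕ) :
    ent (vecCons j t) (i + 1) = ent t i := by
  by_cases h : i < L
  · rw [ent_of_lt h, ent_of_lt (Nat.succ_lt_succ h)]
    rfl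
  · simp [ent, h]

theorem ent_vecCons_of_pos {i : ℕ} (hi : 0 < i) (j : ℕ) (t : Fin L → ℕ) :
    ent (vecCons j t) i = ent t (i - 1) := by
  obtain ⟨i, rfl⟩ := Nat.exists_eq_add_one.2 hi
  exact ent_vecCons_succ j t i

theorem mem_Idx : t ∈ Idx n L ↔ (∀ i, 1 ≤ t i ∧ t i ≤ n) ∧ Antitone t := by
  simp [Idx, Antitone]

theorem Idx_zero (n : ℕ) : Idx n 0 = {![]} := by
  ext t
  simp [mem_Idx, Subsingleton.elim t ![], Subsingleton.antitone]

theorem vecCons_mem_Idx {j : ℕ} :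
    vecCons j t ∈ Idx n (L + 1) ↔ j ∈ Icc 1 n ∧ t ∈ Idx j L := by
  simp only [mem_Idx, mem_Icc, Antitone, Fin.forall_fin_succ, cons_val_zero, cons_val_succ]
  grind

theorem sum_Idx_succ {R : Type*} [AddCommMonoid R] (F : (Fin (L + 1) → ℕ) → R) :
    ∑ t ∈ Idx n (L + 1), F t = ∑ j ∈ Icc 1 n, ∑ t ∈ Idx j L, F (vecCons j t) := by
  rw [sum_sigma']
  refine (sum_bij' (fun x _ ↦ vecCons x.1 x.2) (fun t _ ↦ ⟨vecHead t, vecTail t⟩)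
    (fun x hx ↦ ?_) (fun t ht ↦ ?_) (fun _ _ ↦ rfl) (fun t _ ↦ cons_head_tail t)
    (fun _ _ ↦ rfl)).symm
  · exact vecCons_mem_Idx.2 (mem_sigma.1 hx)
  · exact mem_sigma.2 (vecCons_mem_Idx.1 (by rwa [cons_head_tail]))

theorem one_le_ent (ht : t ∈ Idx n L) (i : ℕ) : 1 ≤ ent t i := by
  unfold ent
  split_ifs with h
  · exact ((mem_Idx.1 ht).1 _).1
  · exact le_rfl

theorem antitone_ent (ht : t ∈ Idx n L) : Antitone (ent t) := by
  intro i j hij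
  by_cases hj : j < L
  · rw [ent_of_lt hj, ent_of_lt (hij.trans_lt hj)]
    exact (mem_Idx.1 ht).2 hij
  · rw [ent, dif_neg hj]
    exact one_le_ent ht i

end IndexTuples

section NestedSum

variable {R : Type*} [CommSemiring R]

/-- The nested sum `∑_{n ≥ n₁ ≥ ⋯ ≥ n_L ≥ 1} w₀(n, n₁) w₁(n₁, n₂) ⋯ w_{L-1}(n_{L-1}, n_L) g(n_L)`,
in which `w i` weights the passage from the `i`-th index to the next, the zeroth one being `n`. -/
def nestedSum (w : ℕ → ℕ → ℕ → R) : ℕ → (ℕ → R) → ℕ → R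
  | 0, g, n => g n
  | L + 1, g, n => ∑ j ∈ Icc 1 n, w 0 n j * nestedSum (fun i ↦ w (i + 1)) L g j

theorem nestedSum_eq_sum_Idx (w : ℕ → ℕ → ℕ → R) (L : ℕ) (g : ℕ → R) (n : ℕ) :
    nestedSum w L g n = ∑ t ∈ Idx n L,
      (∏ i ∈ range L, w i (ent (vecCons n t) i) (ent t i)) * g (ent (vecCons n t) L) := by
  induction L generalizing w n with
  | zero => simp [nestedSum, Idx_zero, ent_vecCons_zero]
  | succ L ih =>
    simp only [nestedSum, sum_Idx_succ, ih, mul_sum]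
    refine sum_congr rfl fun j _ ↦ sum_congr rfl fun t _ ↦ ?_
    simp only [prod_range_succ', ent_vecCons_succ, ent_vecCons_zero]
    ring

theorem nestedSum_congr {w w' : ℕ → ℕ → ℕ → R} {L : ℕ} (h : ∀ i < L, w i = w' i) (g : ℕ → R) :
    nestedSum w L g = nestedSum w' L g := by
  funext n
  simp only [nestedSum_eq_sum_Idx]
  refine sum_congr rfl fun t _ ↦ congrArg (· * _) (prod_congr rfl fun i hi ↦ ?_)
  rw [h i (mem_range.1 hi)]

theorem nestedSum_add (w : ℕ → ℕ → ℕ → R) (L L' : ℕ) (g : ℕ → R) :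
    nestedSum w (L + L') g = nestedSum w L (nestedSum (fun i ↦ w (i + L)) L' g) := by
  funext n
  induction L generalizing w n with
  | zero => simp only [zero_add, add_zero, nestedSum]
  | succ L ih =>
    rw [add_right_comm]
    simp only [nestedSum, ih, add_assoc]

theorem nestedSum_mod_mul_succ (w : ℕ → ℕ → ℕ → R) (m d : ℕ) (g : ℕ → R) :
    nestedSum (fun i ↦ w (i % m)) (m * (d + 1)) g =
      nestedSum w m (nestedSum (fun i ↦ w (i % m)) (m * d) g) := by
  rw [mul_add_one, add_comm, nestedSum_add]
  simp only [Nat.add_mod_right]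
  exact nestedSum_congr (fun i hi ↦ by rw [Nat.mod_eq_of_lt hi]) _

theorem nestedSum_apply_zero (w : ℕ → ℕ → ℕ → R) {g : ℕ → R} (hg : g 0 = 0) (L : ℕ) :
    nestedSum w L g 0 = 0 := by
  cases L <;> simp [nestedSum, hg]

end NestedSum

section BinomialMean

variable {R : Type*} [CommRing R] (p : R)

/-- The mean of `f` under the binomial distribution with parameters `n` and `p`. -/
def binomialMean (f : ℕ → R) (n : ℕ) : R :=
  ∑ k ∈ range (n + 1), (n.choose k : R) * p ^ k * (1 - p) ^ (n - k) * f k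

theorem binomialMean_zero (f : ℕ → R) : binomialMean p f 0 = f 0 := by
  simp [binomialMean]

theorem binomialMean_add (f g : ℕ → R) (n : ℕ) :
    binomialMean p (fun k ↦ f k + g k) n = binomialMean p f n + binomialMean p g n := by
  simp only [binomialMean, mul_add, sum_add_distrib]

theorem binomialMean_pow (a : R) (n : ℕ) :
    binomialMean p (fun k ↦ a ^ k) n = (1 - p + a * p) ^ n := by
  rw [add_comm, add_pow, binomialMean]
  refine sum_congr rfl fun k _ ↦ ?_
  ring

theorem binomialMean_pow_sub_zero_pow (a : R) (n : ℕ) :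
    binomialMean p (fun k ↦ a ^ k - 0 ^ k) n = (1 - p + a * p) ^ n - (1 - p) ^ n := by
  rw [← binomialMean_pow, eq_sub_iff_add_eq]
  have mean_zero_pow : binomialMean p (fun k ↦ 0 ^ k) n = (1 - p) ^ n := by
    rw [binomialMean_pow, zero_mul, add_zero]
  rw [← mean_zero_pow, ← binomialMean_add]
  simp only [sub_add_cancel]

theorem binomialMean_succ (f : ℕ → R) (n : ℕ) :
    binomialMean p f (n + 1) =
      (1 - p) * binomialMean p f n + p * binomialMean p (fun k ↦ f (k + 1)) n := by
  have pascal := sum_choose_succ_mul (fun k l ↦ p ^ k * (1 - p) ^ l * f k) n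
  simp only [binomialMean, mul_assoc] at pascal ⊢
  rw [pascal, mul_sum, mul_sum]
  congr 1 <;> refine sum_congr rfl fun k hk ↦ ?_
  · rw [Nat.succ_sub (mem_range_succ_iff.1 hk), pow_succ]
    ring
  · ring

end BinomialMean

section BlockWeight

/-- The power of `q` attached to the passage from an index `x` to the next index `j`, at position
`i` inside a block: the passage into a block is free, each later one costs `q ^ (x - j)`. -/
def blockWeight {R : Type*} [Monoid R] (q : R) : ℕ → ℕ → ℕ → R
  | 0, _, _ => 1
  | _ + 1, x, j => q ^ (x - j)

variable {R : Type*} [CommMonoid R]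

theorem prod_range_mul_eq_prod_prod (F : ℕ → R) (m d : ℕ) :
    ∏ i ∈ range (m * d), F i = ∏ r ∈ range d, ∏ i ∈ range m, F (m * r + i) := by
  induction d with
  | zero => simp
  | succ d ih => rw [mul_add_one, prod_range_add, prod_range_succ, ih]

theorem prod_pow_tsub_of_antitone (q : R) {u : ℕ → ℕ} (hu : Antitone u) (m : ℕ) :
    ∏ i ∈ range m, q ^ (u i - u (i + 1)) = q ^ (u 0 - u m) := by
  induction m with
  | zero => simp
  | succ m ih =>
    rw [prod_range_succ, ih, ← pow_add, tsub_add_tsub_cancel (hu m.zero_le) (hu m.le_succ)]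

theorem prod_blockWeight (q : R) {m n L : ℕ} (hm : 0 < m) {t : Fin L → ℕ} (ht : t ∈ Idx n L)
    (x d : ℕ) :
    ∏ i ∈ range (m * d), blockWeight q (i % m) (ent (vecCons x t) i) (ent t i) =
      ∏ r ∈ range d, q ^ (ent t (m * r) - ent t (m * (r + 1) - 1)) := by
  obtain ⟨m, rfl⟩ := Nat.exists_eq_add_one.2 hm
  rw [prod_range_mul_eq_prod_prod]
  refine prod_congr rfl fun r _ ↦ ?_
  have weight_succ : ∀ i ∈ range m,
      blockWeight q (((m + 1) * r + (i + 1)) % (m + 1))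
          (ent (vecCons x t) ((m + 1) * r + (i + 1))) (ent t ((m + 1) * r + (i + 1))) =
        q ^ (ent t ((m + 1) * r + i) - ent t ((m + 1) * r + (i + 1))) := fun i hi ↦ by
    rw [Nat.mul_add_mod, Nat.mod_eq_of_lt (by simpa using hi), ← add_assoc, ent_vecCons_succ,
      blockWeight]
  have antitone_block : Antitone fun i ↦ ent t ((m + 1) * r + i) :=
    fun i j hij ↦ antitone_ent ht (Nat.add_le_add_left hij _)
  rw [prod_range_succ', prod_congr rfl weight_succ, prod_pow_tsub_of_antitone q antitone_block,
    Nat.mul_add_mod, Nat.zero_mod, blockWeight, mul_one]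
  rfl

end BlockWeight

section HarmonicSums

variable {K : Type*} [Field K] [CharZero K] (p : K) {f : ℕ → K}

theorem mul_binomialMean_succ_div (hf : f 0 = 0) (n : ℕ) :
    p * binomialMean p (fun k ↦ f (k + 1) / (k + 1 : ℕ)) n =
      binomialMean p f (n + 1) / (n + 1 : ℕ) := by
  rw [binomialMean, binomialMean, sum_range_succ' _ (n + 1), hf, mul_zero, add_zero, mul_sum,
    sum_div]
  refine sum_congr rfl fun k _ ↦ ?_
  have absorb : ((n + 1 : ℕ) : K) * n.choose k = (n + 1).choose (k + 1) * (k + 1 : ℕ) :=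
    mod_cast Nat.add_one_mul_choose_eq n k
  have hk : ((k + 1 : ℕ) : K) ≠ 0 := Nat.cast_ne_zero.2 k.succ_ne_zero
  have hn : ((n + 1 : ℕ) : K) ≠ 0 := Nat.cast_ne_zero.2 n.succ_ne_zero
  rw [Nat.add_sub_add_right, mul_div_assoc', mul_div_assoc', div_eq_div_iff hk hn]
  linear_combination p ^ (k + 1) * (1 - p) ^ (n - k) * f (k + 1) * absorb

theorem binomialMean_sum_div (hf : f 0 = 0) (n : ℕ) :
    binomialMean p (fun k ↦ ∑ j ∈ Icc 1 k, f j / j) n = ∑ j ∈ Icc 1 n, binomialMean p f j / j := by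
  induction n with
  | zero => simp [binomialMean_zero]
  | succ n ih =>
    simp only [binomialMean_succ _ _ n, sum_Icc_succ_top (Nat.le_add_left 1 _), binomialMean_add]
    rw [mul_add, mul_binomialMean_succ_div p hf, ih, binomialMean_succ]
    ring

theorem binomialMean_div (hf : f 0 = 0) (n : ℕ) :
    binomialMean p (fun k ↦ f k / k) n =
      ∑ j ∈ Icc 1 n, (1 - p) ^ (n - j) / j * binomialMean p f j := by
  induction n with
  | zero => simp [binomialMean_zero]
  | succ n ih =>
    rw [binomialMean_succ, mul_binomialMean_succ_div p hf, ih, mul_sum,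
      sum_Icc_succ_top (Nat.le_add_left 1 n)]
    congr 1
    · refine sum_congr rfl fun j hj ↦ ?_
      rw [Nat.succ_sub (mem_Icc.1 hj).2, pow_succ]
      ring
    · rw [Nat.sub_self]
      ring

theorem binomialMean_div_pow (hf : f 0 = 0) (m : ℕ) :
    binomialMean p (fun k ↦ f k / (k : K) ^ m) =
      nestedSum (fun _ x j ↦ (1 - p) ^ (x - j) / (j : K)) m (binomialMean p f) := by
  induction m with
  | zero => simp [nestedSum]
  | succ m ih =>
    funext n
    simp only [pow_succ, ← div_div]
    rw [binomialMean_div p (by simp [hf]), ih]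
    rfl

theorem binomialMean_sum_div_pow {m : ℕ} (hm : 0 < m) (hf : f 0 = 0) :
    binomialMean p (fun k ↦ ∑ j ∈ Icc 1 k, f j / (j : K) ^ m) =
      nestedSum (fun i x j ↦ blockWeight (1 - p) i x j / j) m (binomialMean p f) := by
  obtain ⟨m, rfl⟩ := Nat.exists_eq_add_one.2 hm
  funext n
  simp only [pow_succ, ← div_div]
  rw [binomialMean_sum_div p (f := fun j ↦ f j / (j : K) ^ m) (by simp [hf]),
    binomialMean_div_pow p hf]
  simp only [nestedSum, blockWeight, one_div_mul_eq_div]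

theorem binomialMean_nestedSum_inv_pow {m : ℕ} (hm : 0 < m) (hf : f 0 = 0) (d : ℕ) :
    binomialMean p (nestedSum (fun _ _ j ↦ ((j : K) ^ m)⁻¹) d f) =
      nestedSum (fun i x j ↦ blockWeight (1 - p) (i % m) x j / j) (m * d) (binomialMean p f) := by
  induction d with
  | zero => rfl
  | succ d ih =>
    rw [nestedSum_mod_mul_succ (fun i x j ↦ blockWeight (1 - p) i x j / (j : K)), ← ih,
      ← binomialMean_sum_div_pow p hm (nestedSum_apply_zero _ hf d)]
    simp only [div_eq_inv_mul]
    rfl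

end HarmonicSums

theorem zetaStarK_eq_nestedSum {s : List ℕ} (hs : s ≠ []) (a : ℝ) (k : ℕ) :
    zetaStarK k s a =
      nestedSum (fun i _ j ↦ ((j : ℝ) ^ s.getD i 0)⁻¹) s.length (fun j ↦ a ^ j - 0 ^ j) k := by
  rw [nestedSum_eq_sum_Idx, zetaStarK]
  refine sum_congr rfl fun t ht ↦ ?_
  have last_ne_zero : ent t (s.length - 1) ≠ 0 := Nat.one_le_iff_ne_zero.1 (one_le_ent ht _)
  have denominator : ∏ i ∈ range s.length, (ent t i : ℝ) ^ s.getD i 0 =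
      ∏ i : Fin s.length, (t i : ℝ) ^ s.get i := by
    rw [prod_range]
    exact prod_congr rfl fun i _ ↦ by rw [ent_of_lt i.2, List.getD_eq_getElem _ _ i.2]; rfl
  rw [prod_inv_distrib, denominator, ent_vecCons_of_pos (List.length_pos_iff.2 hs),
    zero_pow last_ne_zero, sub_zero, div_eq_inv_mul]

theorem M_eq_binomialMean {s : List ℕ} (hs : s ≠ []) (n : ℕ) (a p : ℝ) :
    M n s a p = binomialMean p (fun k ↦ zetaStarK k s a) n := by
  have zetaStarK_zero : zetaStarK 0 s a = 0 := by
    rw [zetaStarK_eq_nestedSum hs, nestedSum_apply_zero _ (by simp)]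
  rw [M, binomialMean, range_eq_Ico, sum_eq_sum_Ico_succ_bot n.add_one_pos, zetaStarK_zero,
    mul_zero, zero_add, zero_add, Ico_add_one_right_eq_Icc]

theorem zetaStarK_replicate {d : ℕ} (hd : 0 < d) (m : ℕ) (a : ℝ) (k : ℕ) :
    zetaStarK k (List.replicate d m) a =
      nestedSum (fun _ _ j ↦ ((j : ℝ) ^ m)⁻¹) d (fun j ↦ a ^ j - 0 ^ j) k := by
  rw [zetaStarK_eq_nestedSum (by simpa using hd.ne'), List.length_replicate]
  exact congrFun (nestedSum_congr (fun i hi ↦ by simp [hi]) _) k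

/-- Transformation of the Mneimneh-like sum for `s = {m}_d`. -/
theorem stmt_4 (a p : ℝ) (hp : p ≠ 1) (d m n : ℕ) (hd : 0 < d) (hm : 0 < m)
    (hn : 0 < n) :
    M n (List.replicate d m) a p =
      ∑ t ∈ Idx n (m * d),
        (∏ r ∈ Finset.range d, (1 - p) ^ (ent t (m * r) - ent t (m * (r + 1) - 1))) /
          (∏ i ∈ Finset.range (m * d), (ent t i : ℝ)) *
          ((1 - p + a * p) ^ ent t (m * d - 1) - (1 - p) ^ ent t (m * d - 1)) := by
  have replicate_ne_nil : List.replicate d m ≠ [] := by simpa using hd.ne'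
  simp only [M_eq_binomialMean replicate_ne_nil, zetaStarK_replicate hd]
  rw [binomialMean_nestedSum_inv_pow p hm (by simp), nestedSum_eq_sum_Idx]
  refine sum_congr rfl fun t ht ↦ ?_
  rw [prod_div_distrib, prod_blockWeight _ hm ht, binomialMean_pow_sub_zero_pow,
    ent_vecCons_of_pos (Nat.mul_pos hm hd)]
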